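/- Let d and t be positive integers and let h_1, …, h_t ∈ ℝ^d be such that the additive subgroup h_1ℤ + h_2ℤ + ⋯ + h_tℤ is dense in ℝ^d. Let W and H be finite-dimensional linear subspaces of C(ℝ^d, ℂ), and let m_1, …, m_t be positive integers such that Δ_{h_k}^{m_k}(W) ⊆ H and Δ_{h_k}^{m_k}(H) ⊆ H for every k = 1, …, t. Then there exists a finite-dimensional translation-invariant linear subspace Z of C(ℝ^d, ℂ) that contains W ∪ H; consequently, every element of W ∪ H is a continuous exponential polynomial. -/

import Mathlib

/-- Forward difference operator: `(fd h f) x = f (x + h) - f x`. -/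
def fd {α : Type*} [Add α] (h : α) (f : α → ℂ) : α → ℂ := fun x => f (x + h) - f x

/-- `f : ℝ^d → ℂ` is a continuous exponential polynomial:
`f x = ∑ j, p j (x) * exp (⟨λ_j, x⟩)` with `p j` polynomials in `d` variables
with complex coefficients and `λ_j ∈ ℂ^d`. -/
def IsExpPoly (d : ℕ) (f : (Fin d → ℝ) → ℂ) : Prop :=
  ∃ (n : ℕ) (p : Fin n → MvPolynomial (Fin d) ℂ) (lam : Fin n → Fin d → ℂ),
    ∀ x, f x = ∑ j, (MvPolynomial.eval (fun i => (x i : ℂ)) (p j)) *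
      Complex.exp (∑ i, lam j i * (x i : ℂ))

/-!
The difference operators `Δ_{h_k}` commute, so closing `W + H` under one of them at a time preserves
invariance under the powers `Δ_{h_j}^{m_j}`; only powers below `m_k` contribute to the closure under
`Δ_{h_k}`, so the space stays finite-dimensional. Translations are invertible and a
finite-dimensional space is closed, hence invariance under translation by the `h_k` passes first to
the subgroup they generate and then to its closure, all of `ℝ^d`. On the resulting space `Z`
translation is a continuous representation of `ℝ^d`, whose restriction to each coordinate axis has
the form `exp (s • a)` and acts on a generalized eigenvector of `a` by an exponential times a
polynomial in `s`. Evaluating the translates of `g ∈ Z` at the origin recovers `g`.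
-/

section InvariantClosure

variable {R M : Type*} [Semiring R] [AddCommMonoid M] [Module R M]

/-- The smallest submodule containing `V` that is invariant under every endomorphism in `S`. -/
def invtClosure (S : Set (Module.End R M)) (V : Submodule R M) : Submodule R M :=
  sInf {U | V ≤ U ∧ ∀ f ∈ S, U ∈ f.invtSubmodule}

variable {S : Set (Module.End R M)} {V U : Submodule R M} {f g : Module.End R M}

theorem le_invtClosure (S : Set (Module.End R M)) (V : Submodule R M) : V ≤ invtClosure S V :=
  le_sInf fun _ hU ↦ hU.1

theorem invtClosure_le (hVU : V ≤ U) (hU : ∀ f ∈ S, U ∈ f.invtSubmodule) :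
    invtClosure S V ≤ U :=
  sInf_le ⟨hVU, hU⟩

theorem invtClosure_mem_invtSubmodule (V : Submodule R M) (hf : f ∈ S) :
    invtClosure S V ∈ f.invtSubmodule := fun _ hx ↦
  Submodule.mem_sInf.2 fun U hU ↦ hU.2 f hf (Submodule.mem_sInf.1 hx U hU)

theorem comap_mem_invtSubmodule_of_commute (hfg : Commute f g) (hU : U ∈ f.invtSubmodule) :
    U.comap g ∈ f.invtSubmodule := fun x hx ↦ by
  have hgf : g (f x) = f (g x) := (LinearMap.congr_fun hfg.eq x).symm
  simpa only [Submodule.mem_comap, hgf] using hU hx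

theorem invtClosure_mem_invtSubmodule_of_commute (hg : ∀ f ∈ S, Commute f g)
    (hV : V ∈ g.invtSubmodule) : invtClosure S V ∈ g.invtSubmodule :=
  invtClosure_le (hV.trans (Submodule.comap_mono (le_invtClosure S V))) fun f hf ↦
    comap_mem_invtSubmodule_of_commute (hg f hf) (invtClosure_mem_invtSubmodule V hf)

theorem invtClosure_empty (V : Submodule R M) : invtClosure ∅ V = V :=
  (invtClosure_le le_rfl (by simp)).antisymm (le_invtClosure _ _)

theorem invtClosure_insert (hf : ∀ g ∈ S, Commute f g) :
    invtClosure (insert f S) V = invtClosure {f} (invtClosure S V) := by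
  refine le_antisymm (invtClosure_le ((le_invtClosure S V).trans (le_invtClosure _ _)) ?_)
    (invtClosure_le (invtClosure_le (le_invtClosure _ _) fun g hg ↦ ?_) ?_)
  · refine Set.forall_mem_insert.2
      ⟨invtClosure_mem_invtSubmodule _ (Set.mem_singleton f), fun g hg ↦ ?_⟩
    exact invtClosure_mem_invtSubmodule_of_commute (by simpa using hf g hg)
      (invtClosure_mem_invtSubmodule V hg)
  · exact invtClosure_mem_invtSubmodule V (Set.mem_insert_of_mem f hg)
  · simpa using invtClosure_mem_invtSubmodule V (Set.mem_insert f S)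

theorem mem_invtSubmodule_pow (hU : U ∈ f.invtSubmodule) (n : ℕ) :
    U ∈ (f ^ n).invtSubmodule := by
  induction n with
  | zero => simp [pow_zero]
  | succ n ih => exact pow_succ f n ▸ Module.End.invtSubmodule.comp _ ih hU

theorem iSup_map_pow_mem_invtSubmodule {n : ℕ} (hn : 0 < n) (hV : V ∈ (f ^ n).invtSubmodule) :
    (⨆ j : Fin n, V.map (f ^ (j : ℕ))) ∈ f.invtSubmodule := by
  rw [Module.End.mem_invtSubmodule, iSup_le_iff]
  rintro j _ ⟨v, hv, rfl⟩
  have hsucc : f ((f ^ (j : ℕ)) v) = (f ^ (j + 1 : ℕ)) v := by rw [pow_succ']; rfl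
  rw [Submodule.mem_comap, hsucc]
  rcases Nat.lt_or_eq_of_le (Nat.succ_le_of_lt j.isLt) with hj | hj
  · exact Submodule.mem_iSup_of_mem ⟨j + 1, hj⟩ (Submodule.mem_map_of_mem hv)
  · refine Submodule.mem_iSup_of_mem ⟨0, hn⟩ ⟨(f ^ n) v, hV hv, ?_⟩
    simp [← hj]

theorem invtClosure_singleton {n : ℕ} (hn : 0 < n) (hV : V ∈ (f ^ n).invtSubmodule) :
    invtClosure {f} V = ⨆ j : Fin n, V.map (f ^ (j : ℕ)) := by
  refine le_antisymm (invtClosure_le ?_ ?_) (iSup_le fun j ↦ ?_)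
  · exact fun v hv ↦ Submodule.mem_iSup_of_mem ⟨0, hn⟩ ⟨v, hv, by simp⟩
  · simpa using iSup_map_pow_mem_invtSubmodule hn hV
  · have hpow : invtClosure {f} V ∈ (f ^ (j : ℕ)).invtSubmodule :=
      mem_invtSubmodule_pow (invtClosure_mem_invtSubmodule V (Set.mem_singleton f)) j
    rintro _ ⟨v, hv, rfl⟩
    exact hpow (le_invtClosure _ _ hv)

theorem fg_invtClosure (hS : S.Finite) (hcomm : ∀ f ∈ S, ∀ g ∈ S, Commute f g) (hV : V.FG)
    (hpow : ∀ f ∈ S, ∃ n, 0 < n ∧ V ∈ (f ^ n).invtSubmodule) : (invtClosure S V).FG := by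
  induction S, hS using Set.Finite.induction_on with
  | empty => rwa [invtClosure_empty]
  | @insert f S _ _ ih =>
    obtain ⟨n, hn, hVn⟩ := hpow f (Set.mem_insert f S)
    have hf : ∀ g ∈ S, Commute f g := fun g hg ↦
      hcomm f (Set.mem_insert f S) g (Set.mem_insert_of_mem f hg)
    have hclosure : invtClosure S V ∈ (f ^ n).invtSubmodule :=
      invtClosure_mem_invtSubmodule_of_commute (fun g hg ↦ ((hf g hg).pow_left n).symm) hVn
    rw [invtClosure_insert hf, invtClosure_singleton hn hclosure]
    refine Submodule.fg_iSup _ fun j ↦ (ih ?_ ?_).map _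
    · exact fun g hg g' hg' ↦
        hcomm g (Set.mem_insert_of_mem f hg) g' (Set.mem_insert_of_mem f hg')
    · exact fun g hg ↦ hpow g (Set.mem_insert_of_mem f hg)

end InvariantClosure

section Translation

variable {G : Type*}

/-- The additive character `y ↦ (φ y)|_Z` obtained by restricting linear operators to a common
invariant submodule `Z`. -/
def restrictAddChar {R M : Type*} [AddMonoid G] [Semiring R] [AddCommMonoid M] [Module R M]
    (φ : AddChar G (Module.End R M)) {Z : Submodule R M} (hZ : ∀ y, Z ∈ (φ y).invtSubmodule) :
    AddChar G (Module.End R Z) where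
  toFun y := (φ y).restrict (hZ y)
  map_zero_eq_one' := by ext; simp
  map_add_eq_mul' x y := by
    ext z
    exact LinearMap.congr_fun (φ.map_add_eq_mul x y) z

/-- Translation of functions, `(translation R M G y f) x = f (x + y)`, as a representation of the
additive group `G` on `G → M`. -/
def translation (R M G : Type*) [AddMonoid G] [Semiring R] [AddCommMonoid M] [Module R M] :
    AddChar G (Module.End R (G → M)) where
  toFun y := LinearMap.funLeft R M (· + y)
  map_zero_eq_one' := by ext; simp
  map_add_eq_mul' y z := by ext; simp [add_assoc]

theorem commute_addChar {A : Type*} [AddCommMonoid G] [Monoid A] (φ : AddChar G A) (x y : G) :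
    Commute (φ x) (φ y) := by
  rw [Commute, SemiconjBy, ← φ.map_add_eq_mul, ← φ.map_add_eq_mul, add_comm]

theorem translation_sub_one_pow_apply [AddMonoid G] (y : G) (n : ℕ) (f : G → ℂ) :
    ((translation ℂ ℂ G y - 1) ^ n) f = (fd y)^[n] f := by
  rw [Module.End.pow_apply]; rfl

section FiniteDimensional

variable {K E : Type*} [DivisionRing K] [AddCommGroup E] [Module K E] {Z : Submodule K E}
  [FiniteDimensional K Z]

theorem mem_invtSubmodule_of_mul_eq_one {f g : Module.End K E} (hgf : g * f = 1)
    (hZ : Z ∈ f.invtSubmodule) : Z ∈ g.invtSubmodule := by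
  have hleft : ∀ z, g (f z) = z := LinearMap.congr_fun hgf
  have hsurj : Function.Surjective (f.restrict hZ) :=
    LinearMap.surjective_of_injective fun _ _ h ↦
      Subtype.ext <| (Function.LeftInverse.injective hleft) (congrArg Subtype.val h)
  intro z hz
  obtain ⟨w, hw⟩ := hsurj ⟨z, hz⟩
  obtain rfl : f w = z := congrArg Subtype.val hw
  rw [Submodule.mem_comap, hleft]
  exact w.2

theorem mem_invtSubmodule_of_mem_closure [AddGroup G] {φ : AddChar G (Module.End K E)} {s : Set G}
    (hZ : ∀ y ∈ s, Z ∈ (φ y).invtSubmodule) {y : G} (hy : y ∈ AddSubgroup.closure s) :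
    Z ∈ (φ y).invtSubmodule := by
  induction hy using AddSubgroup.closure_induction with
  | mem y hy => exact hZ y hy
  | zero => simp
  | add x y _ _ hx hy => exact φ.map_add_eq_mul x y ▸ Module.End.invtSubmodule.comp _ hx hy
  | neg y _ hy =>
    refine mem_invtSubmodule_of_mul_eq_one ?_ hy
    rw [← φ.map_add_eq_mul, neg_add_cancel, φ.map_zero_eq_one]

end FiniteDimensional

section Topology

theorem continuous_translation_apply {R M : Type*} [TopologicalSpace G] [AddMonoid G]
    [ContinuousAdd G] [Semiring R] [AddCommMonoid M] [Module R M] [TopologicalSpace M]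
    {f : G → M} (hf : Continuous f) : Continuous fun y ↦ translation R M G y f :=
  continuous_pi fun x ↦ hf.comp (continuous_const_add x)

theorem isClosed_setOf_mem_invtSubmodule_translation {R M : Type*} [TopologicalSpace G]
    [AddMonoid G] [ContinuousAdd G] [Semiring R] [AddCommMonoid M] [Module R M]
    [TopologicalSpace M] {Z : Submodule R (G → M)} (hZ : IsClosed (Z : Set (G → M)))
    (hcont : ∀ f ∈ Z, Continuous f) :
    IsClosed {y | Z ∈ (translation R M G y).invtSubmodule} := by
  simp only [Module.End.mem_invtSubmodule_iff_forall_mem_of_mem, Set.ofPred_forall]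
  exact isClosed_biInter fun f hf ↦ hZ.preimage (continuous_translation_apply (hcont f hf))

variable [TopologicalSpace G] [AddCommGroup G] [ContinuousAdd G]
  {𝕜 E : Type*} [NontriviallyNormedField 𝕜] [CompleteSpace 𝕜] [AddCommGroup E] [Module 𝕜 E]
  [TopologicalSpace E] [IsTopologicalAddGroup E] [ContinuousSMul 𝕜 E] [T2Space E]

theorem mem_invtSubmodule_translation_of_dense {Z : Submodule 𝕜 (G → E)} [FiniteDimensional 𝕜 Z]
    (hcont : ∀ f ∈ Z, Continuous f) {s : Set G} (hs : Dense (AddSubgroup.closure s : Set G))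
    (hZ : ∀ y ∈ s, Z ∈ (translation 𝕜 E G y).invtSubmodule) (y : G) :
    Z ∈ (translation 𝕜 E G y).invtSubmodule :=
  closure_minimal (fun _ ↦ mem_invtSubmodule_of_mem_closure hZ)
    (isClosed_setOf_mem_invtSubmodule_translation Z.closed_of_finiteDimensional hcont) (hs y)

theorem exists_translation_invariant_of_pow_sub_one {V : Submodule 𝕜 (G → E)}
    [FiniteDimensional 𝕜 V] (hcont : ∀ f ∈ V, Continuous f) {s : Set G} (hfin : s.Finite)
    (hs : Dense (AddSubgroup.closure s : Set G))
    (hV : ∀ y ∈ s, ∃ n, 0 < n ∧ V ∈ ((translation 𝕜 E G y - 1) ^ n).invtSubmodule) :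
    ∃ Z : Submodule 𝕜 (G → E), FiniteDimensional 𝕜 Z ∧ (∀ f ∈ Z, Continuous f) ∧
      (∀ y, Z ∈ (translation 𝕜 E G y).invtSubmodule) ∧ V ≤ Z := by
  set D : G → Module.End 𝕜 (G → E) := fun y ↦ translation 𝕜 E G y - 1
  have hcomm : ∀ y z, Commute (D y) (D z) := fun y z ↦
    ((commute_addChar _ y z).sub_right (.one_right _)).sub_left (.one_left _)
  have hDcont : ∀ y ∈ s, continuousSubmodule G 𝕜 E ∈ (D y).invtSubmodule := fun y _ f hf ↦
    (hf.comp (continuous_add_const y)).sub hf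
  set Z := invtClosure (D '' s) V
  have hZfd : FiniteDimensional 𝕜 Z := Module.Finite.iff_fg.2 <|
    fg_invtClosure (hfin.image D)
      (Set.forall_mem_image.2 fun y _ ↦ Set.forall_mem_image.2 fun z _ ↦ hcomm y z)
      (Module.Finite.iff_fg.1 inferInstance) (Set.forall_mem_image.2 hV)
  have hZcont : Z ≤ continuousSubmodule G 𝕜 E :=
    invtClosure_le hcont (Set.forall_mem_image.2 hDcont)
  refine ⟨Z, hZfd, hZcont, mem_invtSubmodule_translation_of_dense hZcont hs fun y hy f hf ↦ ?_,
    le_invtClosure _ _⟩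
  have hDf : D y f ∈ Z := invtClosure_mem_invtSubmodule V (Set.mem_image_of_mem D hy) hf
  simpa [D] using add_mem hDf hf

end Topology

end Translation

section OneParameterGroup

open NormedSpace

variable {A : Type*} [NormedRing A] [NormedAlgebra ℝ A] [CompleteSpace A]

theorem exists_isUnit_intervalIntegral {φ : ℝ → A} (hφ : Continuous φ) (h0 : IsUnit (φ 0)) :
    ∃ r : ℝ, IsUnit (∫ u in (0 : ℝ)..r, φ u) := by
  have hslope : Filter.Tendsto (fun r : ℝ ↦ r⁻¹ • ∫ u in (0 : ℝ)..r, φ u)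
      (nhdsWithin 0 {0}ᶜ) (nhds (φ 0)) := by
    simpa using (hφ.integral_hasStrictDerivAt 0 0).hasDerivAt.tendsto_slope_zero
  obtain ⟨r, hunit, hr⟩ :=
    ((hslope.eventually (Units.isOpen.mem_nhds h0)).and self_mem_nhdsWithin).exists
  exact ⟨r, (isUnit_smul_iff (Units.mk0 r hr)⁻¹ _).1 hunit⟩

theorem addChar_mul_intervalIntegral (φ : AddChar ℝ A) (hφ : Continuous φ) (r s : ℝ) :
    φ s * (∫ u in (0 : ℝ)..r, φ u) =
      (∫ u in (0 : ℝ)..(s + r), φ u) - ∫ u in (0 : ℝ)..s, φ u := by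
  have hφ_int : ∀ a b, IntervalIntegrable φ MeasureTheory.volume a b := hφ.intervalIntegrable
  calc φ s * (∫ u in (0 : ℝ)..r, φ u)
      = ∫ u in (0 : ℝ)..r, φ (s + u) := by
        simp only [AddChar.map_add_eq_mul]
        exact ((ContinuousLinearMap.mul ℝ A (φ s)).intervalIntegral_comp_comm (hφ_int 0 r)).symm
    _ = ∫ u in s..(s + r), φ u := by
        rw [intervalIntegral.integral_comp_add_left (fun u ↦ φ u), add_zero]
    _ = _ := (intervalIntegral.integral_interval_sub_left (hφ_int _ _) (hφ_int _ _)).symm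

theorem exists_hasDerivAt_addChar (φ : AddChar ℝ A) (hφ : Continuous φ) :
    ∃ a : A, ∀ s, HasDerivAt φ (φ s * a) s := by
  -- Dividing `φ s * ∫ u in 0..r, φ u` by its invertible factor exhibits `φ` as differentiable.
  obtain ⟨r, w, hw⟩ := exists_isUnit_intervalIntegral hφ (by simp)
  have hφ_eq : ⇑φ = fun s ↦
      ((∫ u in (0 : ℝ)..(s + r), φ u) - ∫ u in (0 : ℝ)..s, φ u) * (↑w⁻¹ : A) := by
    funext s
    rw [← addChar_mul_intervalIntegral φ hφ, ← hw, Units.mul_inv_cancel_right]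
  refine ⟨(φ r - 1) * (↑w⁻¹ : A), fun s ↦ ?_⟩
  have hderiv : ∀ s, HasDerivAt (fun s ↦ ∫ u in (0 : ℝ)..s, φ u) (φ s) s := fun s ↦
    (hφ.integral_hasStrictDerivAt 0 s).hasDerivAt
  have hmul : φ s * ((φ r - 1) * (↑w⁻¹ : A)) = (φ (s + r) - φ s) * (↑w⁻¹ : A) := by
    rw [AddChar.map_add_eq_mul]; noncomm_ring
  rw [hmul]
  exact (((hderiv (s + r)).comp_add_const s r).sub (hderiv s)).mul_const (↑w⁻¹ : A)
    |>.congr_of_eventuallyEq (.of_eq hφ_eq)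

theorem exists_addChar_eq_exp_smul (φ : AddChar ℝ A) (hφ : Continuous φ) :
    ∃ a : A, ∀ s, φ s = exp (s • a) := by
  let _ : NormedAlgebra ℚ A := .restrictScalars ℚ ℝ A
  obtain ⟨a, ha⟩ := exists_hasDerivAt_addChar φ hφ
  refine ⟨a, fun s ↦ ?_⟩
  have hderiv : ∀ u, HasDerivAt (fun u ↦ φ u * exp (u • -a)) 0 u := fun u ↦
    ((ha u).mul (hasDerivAt_exp_smul_const' (-a) u)).congr_deriv (by noncomm_ring)
  have hconst : φ s * exp (s • -a) = 1 := by
    simpa using is_const_of_deriv_eq_zero (fun u ↦ (hderiv u).differentiableAt)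
      (fun u ↦ (hderiv u).deriv) s 0
  calc φ s = φ s * (exp (s • -a) * exp (s • a)) := by
        rw [← exp_add_of_commute (by simp), smul_neg, neg_add_cancel, exp_zero, mul_one]
    _ = exp (s • a) := by rw [← mul_assoc, hconst, one_mul]

end OneParameterGroup

section GeneralizedEigenvector

open NormedSpace

variable {𝕜 V : Type*} [RCLike 𝕜] [NormedAddCommGroup V] [NormedSpace 𝕜 V] [CompleteSpace V]

theorem exp_apply_of_pow_apply_eq_zero {N : V →L[𝕜] V} {k : ℕ} {v : V} (hv : (N ^ k) v = 0) :
    exp N v = ∑ j ∈ Finset.range k, (j.factorial : 𝕜)⁻¹ • (N ^ j) v := by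
  have hsum := (ContinuousLinearMap.apply 𝕜 V v).hasSum (exp_series_hasSum_exp' (𝕂 := 𝕜) N)
  refine hsum.unique (hasSum_sum_of_ne_finset_zero fun j hj ↦ ?_)
  obtain ⟨i, rfl⟩ := Nat.exists_eq_add_of_le' (Finset.mem_range.not.1 hj |> not_lt.1)
  simp [pow_add, hv]

theorem exp_smul_apply_of_pow_sub_apply_eq_zero {a : V →L[𝕜] V} {μ : 𝕜} {k : ℕ} {v : V}
    (hv : ((a - algebraMap 𝕜 _ μ) ^ k) v = 0) (c : 𝕜) :
    exp (c • a) v = exp (c * μ) •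
      ∑ j ∈ Finset.range k, (c ^ j / j.factorial) • ((a - algebraMap 𝕜 _ μ) ^ j) v := by
  let _ : NormedAlgebra ℚ (V →L[𝕜] V) := .restrictScalars ℚ 𝕜 _
  set N := a - algebraMap 𝕜 _ μ
  have hdecomp : c • a = algebraMap 𝕜 _ (c * μ) + c • N := by
    simp [N, smul_sub, Algebra.algebraMap_eq_smul_one, mul_smul]
  have hnil : ((c • N) ^ k) v = 0 := by simp [smul_pow, hv]
  rw [hdecomp, exp_add_of_commute (Algebra.commutes _ _), ← algebraMap_exp_comm,
    mul_apply_eq_comp, exp_apply_of_pow_apply_eq_zero (𝕜 := 𝕜) hnil,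
    Algebra.algebraMap_eq_smul_one]
  simp only [smul_pow, FunLike.coe_smul, Pi.smul_apply, smul_smul, div_eq_inv_mul,
    one_apply_eq_self]

end GeneralizedEigenvector

section ExponentialPolynomial

variable {d : ℕ} {f g : (Fin d → ℝ) → ℂ}

theorem IsExpPoly.add (hf : IsExpPoly d f) (hg : IsExpPoly d g) : IsExpPoly d (f + g) := by
  obtain ⟨m, p, μ, hf⟩ := hf
  obtain ⟨n, q, ν, hg⟩ := hg
  exact ⟨m + n, Fin.append p q, Fin.append μ ν, fun x ↦ by simp [Fin.sum_univ_add, hf, hg]⟩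

theorem IsExpPoly.mul (hf : IsExpPoly d f) (hg : IsExpPoly d g) : IsExpPoly d (f * g) := by
  obtain ⟨m, p, μ, hf⟩ := hf
  obtain ⟨n, q, ν, hg⟩ := hg
  refine ⟨m * n, fun j ↦ p (finProdFinEquiv.symm j).1 * q (finProdFinEquiv.symm j).2,
    fun j ↦ μ (finProdFinEquiv.symm j).1 + ν (finProdFinEquiv.symm j).2, fun x ↦ ?_⟩
  rw [Pi.mul_apply, hf, hg, Finset.sum_mul_sum, ← Fintype.sum_prod_type',
    ← finProdFinEquiv.symm.sum_comp]
  refine Finset.sum_congr rfl fun j _ ↦ ?_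
  simp only [map_mul, Pi.add_apply, add_mul, Finset.sum_add_distrib, Complex.exp_add]
  ring

/-- The algebra of continuous exponential polynomials on `ℝ^d`, through which closure under finite
sums, products and scalars is inherited from subalgebras. -/
def expPolySubalgebra (d : ℕ) : Subalgebra ℂ ((Fin d → ℝ) → ℂ) where
  carrier := {f | IsExpPoly d f}
  mul_mem' := IsExpPoly.mul
  add_mem' := IsExpPoly.add
  algebraMap_mem' c := ⟨1, fun _ ↦ MvPolynomial.C c, 0, by simp⟩

theorem coord_pow_mul_exp_mem_expPolySubalgebra (i : Fin d) (j : ℕ) (μ : ℂ) :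
    (fun x ↦ (x i : ℂ) ^ j * Complex.exp (μ * x i)) ∈ expPolySubalgebra d :=
  ⟨1, fun _ ↦ MvPolynomial.X i ^ j, fun _ ↦ Pi.single i μ, by simp [Pi.single_apply]⟩

end ExponentialPolynomial

section MatrixCoefficient

theorem dual_apply_mem_subalgebra {X R M : Type*} [CommSemiring R] [AddCommMonoid M] [Module R M]
    [Module.Free R M] [Module.Finite R M] {S : Subalgebra R (X → R)} {T : X → Module.End R M}
    {F : X → M} (hT : ∀ v, ∀ ℓ : Module.Dual R M, (fun x ↦ ℓ (T x v)) ∈ S)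
    (hF : ∀ ℓ : Module.Dual R M, (fun x ↦ ℓ (F x)) ∈ S) (ℓ : Module.Dual R M) :
    (fun x ↦ ℓ (T x (F x))) ∈ S := by
  let b := Module.Free.chooseBasis R M
  have hexpand : (fun x ↦ ℓ (T x (F x))) =
      ∑ j, (fun x ↦ b.coord j (F x)) * fun x ↦ ℓ (T x (b j)) := by
    ext x
    conv_lhs => rw [← b.sum_repr (F x)]
    simp only [map_sum, map_smul, smul_eq_mul, Finset.sum_apply, Pi.mul_apply,
      Module.Basis.coord_apply]
  rw [hexpand]
  exact sum_mem fun j _ ↦ mul_mem (hF _) (hT _ _)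

variable {d : ℕ} {V : Type*}

section Normed

variable [NormedAddCommGroup V] [NormedSpace ℂ V] [FiniteDimensional ℂ V]

theorem dual_exp_smul_apply_mem_of_pow_sub_apply_eq_zero {a : V →L[ℂ] V} {μ : ℂ} {k : ℕ} {v : V}
    (hv : ((a - algebraMap ℂ _ μ) ^ k) v = 0) (i : Fin d) (ℓ : Module.Dual ℂ V) :
    (fun x ↦ ℓ (NormedSpace.exp (x i • a) v)) ∈ expPolySubalgebra d := by
  have : CompleteSpace V := FiniteDimensional.complete ℂ V
  have hexpand : (fun x : Fin d → ℝ ↦ ℓ (NormedSpace.exp (x i • a) v)) =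
      ∑ j ∈ Finset.range k, (ℓ (((a - algebraMap ℂ _ μ) ^ j) v) / j.factorial) •
        fun x : Fin d → ℝ ↦ (x i : ℂ) ^ j * Complex.exp (μ * x i) := by
    ext x
    rw [← Complex.coe_smul, exp_smul_apply_of_pow_sub_apply_eq_zero hv, ← Complex.exp_eq_exp_ℂ]
    simp only [map_smul, map_sum, smul_eq_mul, Finset.sum_apply, Pi.smul_apply, Finset.mul_sum,
      mul_comm μ]
    exact Finset.sum_congr rfl fun j _ ↦ by ring
  rw [hexpand]
  exact sum_mem fun j _ ↦
    Subalgebra.smul_mem _ (coord_pow_mul_exp_mem_expPolySubalgebra i j μ) _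

theorem dual_exp_smul_apply_mem_expPolySubalgebra (a : V →L[ℂ] V) (i : Fin d) (v : V)
    (ℓ : Module.Dual ℂ V) :
    (fun x ↦ ℓ (NormedSpace.exp (x i • a) v)) ∈ expPolySubalgebra d := by
  have hv : v ∈ ⨆ μ, Module.End.maxGenEigenspace (a : Module.End ℂ V) μ := by
    simp [Module.End.iSup_maxGenEigenspace_eq_top]
  induction hv using Submodule.iSup_induction' with
  | mem μ v hv =>
    obtain ⟨k, hk⟩ := (Module.End.mem_maxGenEigenspace _ _ _).1 hv
    refine dual_exp_smul_apply_mem_of_pow_sub_apply_eq_zero (μ := μ) (k := k) ?_ i ℓ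
    rw [Module.End.pow_apply] at hk
    rwa [FunLike.coe_pow_eq_iterate]
  | zero => simp only [map_zero]; exact zero_mem _
  | add v w _ _ hv hw => simp only [map_add]; exact add_mem hv hw

theorem dual_addChar_single_apply_mem_expPolySubalgebra {T : AddChar (Fin d → ℝ) (V →L[ℂ] V)}
    (hT : Continuous T) (i : Fin d) (v : V) (ℓ : Module.Dual ℂ V) :
    (fun x ↦ ℓ (T (Pi.single i (x i)) v)) ∈ expPolySubalgebra d := by
  have : CompleteSpace V := FiniteDimensional.complete ℂ V
  obtain ⟨a, ha⟩ : ∃ a, ∀ s, T (Pi.single i s) = NormedSpace.exp (s • a) :=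
    exists_addChar_eq_exp_smul (T.compAddMonoidHom (.single (fun _ ↦ ℝ) i))
      (hT.comp (continuous_single (A := fun _ ↦ ℝ) i))
  simpa only [ha] using dual_exp_smul_apply_mem_expPolySubalgebra a i v ℓ

theorem dual_addChar_apply_mem_expPolySubalgebra {T : AddChar (Fin d → ℝ) (V →L[ℂ] V)}
    (hT : Continuous T) (v : V) (ℓ : Module.Dual ℂ V) :
    (fun x ↦ ℓ (T x v)) ∈ expPolySubalgebra d := by
  have hpartial : ∀ (s : Finset (Fin d)) (ℓ : Module.Dual ℂ V),
      (fun x : Fin d → ℝ ↦ ℓ (T (∑ i ∈ s, Pi.single i (x i)) v)) ∈ expPolySubalgebra d := by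
    intro s
    induction s using Finset.induction_on with
    | empty =>
      intro ℓ
      simp only [Finset.sum_empty, AddChar.map_zero_eq_one, one_apply_eq_self]
      exact (expPolySubalgebra d).algebraMap_mem (ℓ v)
    | insert i s hi ih =>
      simp only [Finset.sum_insert hi, AddChar.map_add_eq_mul, mul_apply_eq_comp]
      exact dual_apply_mem_subalgebra
        (T := fun x : Fin d → ℝ ↦ (T (Pi.single i (x i))).toLinearMap)
        (dual_addChar_single_apply_mem_expPolySubalgebra hT i) ih
  simpa only [Finset.univ_sum_single] using hpartial Finset.univ ℓ

end Normed

theorem isExpPoly_dual_addChar_apply [AddCommGroup V] [Module ℂ V] [FiniteDimensional ℂ V]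
    [TopologicalSpace V] [IsTopologicalAddGroup V] [ContinuousSMul ℂ V] [T2Space V]
    (T : AddChar (Fin d → ℝ) (Module.End ℂ V)) (hT : ∀ v, Continuous fun x ↦ T x v) (v : V)
    (ℓ : Module.Dual ℂ V) : IsExpPoly d fun x ↦ ℓ (T x v) := by
  let e : V ≃L[ℂ] (Fin (Module.finrank ℂ V) → ℂ) := (Module.finBasis ℂ V).equivFunL
  let T' : AddChar (Fin d → ℝ) ((Fin (Module.finrank ℂ V) → ℂ) →L[ℂ] _) :=
    ((e.toLinearEquiv.conjAlgEquiv ℂ).trans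
      (Module.End.toContinuousLinearMap _)).toMonoidHom.compAddChar T
  have hT'_apply : ∀ x w, T' x w = e (T x (e.symm w)) := fun _ _ ↦ rfl
  have hT' : Continuous T' := continuous_clm_apply.2 fun w ↦ by
    exact e.continuous.comp (hT (e.symm w))
  have hmem : (fun x ↦ ℓ (T x v)) ∈ expPolySubalgebra d := by
    simpa [hT'_apply] using
      dual_addChar_apply_mem_expPolySubalgebra hT' (e v) (ℓ ∘ₗ e.symm.toLinearMap)
  exact hmem

theorem isExpPoly_of_translation_invariant {Z : Submodule ℂ ((Fin d → ℝ) → ℂ)}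
    [FiniteDimensional ℂ Z] (hcont : ∀ f ∈ Z, Continuous f)
    (hZ : ∀ y, Z ∈ (translation ℂ ℂ (Fin d → ℝ) y).invtSubmodule) {f : (Fin d → ℝ) → ℂ}
    (hf : f ∈ Z) : IsExpPoly d f := by
  have heval : ∀ x, f x = (LinearMap.proj 0 ∘ₗ Z.subtype)
      (restrictAddChar (translation ℂ ℂ (Fin d → ℝ)) hZ x ⟨f, hf⟩) := fun x ↦
    congrArg f (zero_add x).symm
  rw [funext heval]
  exact isExpPoly_dual_addChar_apply (restrictAddChar _ hZ)
    (fun z ↦ (continuous_translation_apply (R := ℂ) (hcont z z.2)).subtype_mk _) _ _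

end MatrixCoefficient

theorem stmt3 (d t : ℕ) (hd : 0 < d) (ht : 0 < t) (h : Fin t → Fin d → ℝ)
    (hdense : Dense ((AddSubgroup.closure (Set.range h) :
      AddSubgroup (Fin d → ℝ)) : Set (Fin d → ℝ)))
    (W H : Submodule ℂ ((Fin d → ℝ) → ℂ))
    (hWc : ∀ g ∈ W, Continuous g) (hHc : ∀ g ∈ H, Continuous g)
    (hWfd : FiniteDimensional ℂ W) (hHfd : FiniteDimensional ℂ H)
    (m : Fin t → ℕ) (hm : ∀ k, 0 < m k)
    (hWH : ∀ k, ∀ g ∈ W, (fd (h k))^[m k] g ∈ H)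
    (hHH : ∀ k, ∀ g ∈ H, (fd (h k))^[m k] g ∈ H) :
    (∃ Z : Submodule ℂ ((Fin d → ℝ) → ℂ), FiniteDimensional ℂ Z ∧
      (∀ g ∈ Z, Continuous g) ∧
      (∀ y : Fin d → ℝ, ∀ g ∈ Z, (fun x => g (x + y)) ∈ Z) ∧
      W ≤ Z ∧ H ≤ Z) ∧
    (∀ g, g ∈ W ∨ g ∈ H → IsExpPoly d g) := by
  have hcont : W ⊔ H ≤ continuousSubmodule (Fin d → ℝ) ℂ ℂ := sup_le hWc hHc
  have hdiff : ∀ k, W ⊔ H ≤ H.comap ((translation ℂ ℂ (Fin d → ℝ) (h k) - 1) ^ m k) :=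
    fun k ↦ sup_le (fun g hg ↦ by simpa [translation_sub_one_pow_apply] using hWH k g hg)
      (fun g hg ↦ by simpa [translation_sub_one_pow_apply] using hHH k g hg)
  have hinvt : ∀ y ∈ Set.range h, ∃ n, 0 < n ∧
      W ⊔ H ∈ ((translation ℂ ℂ (Fin d → ℝ) y - 1) ^ n).invtSubmodule :=
    Set.forall_mem_range.2 fun k ↦
      ⟨m k, hm k, (hdiff k).trans (Submodule.comap_mono le_sup_right)⟩
  obtain ⟨Z, hZfd, hZcont, hZ, hle⟩ :=
    exists_translation_invariant_of_pow_sub_one hcont (Set.finite_range h) hdense hinvt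
  obtain ⟨hWZ, hHZ⟩ := sup_le_iff.1 hle
  exact ⟨⟨Z, hZfd, hZcont, hZ, hWZ, hHZ⟩, fun g hg ↦
    isExpPoly_of_translation_invariant hZcont hZ (hg.elim (hWZ ·) (hHZ ·))⟩
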